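/- Let n ≥ m ≥ 1 and d = n + 1 - ⌊(n+1)/(m+1)⌋ - ⌈(n+1)/(m+1)⌉. Then for all 0 ≤ k ≤ d+1, ∑_{j=0}^{k} (-1)^{k-j} · binom(d+1-j, k-j) · C(n-j+1, m; j) ≤ binom(n-d+k-2, k), where C(N, m; j) is the coefficient of x^j in (1+x+⋯+x^{m-1})^N. -/

import Mathlib

/-- Coefficient of `x^j` in `(1 + x + ⋯ + x^(m-1))^N`, zero if `N < 0` or `j < 0`. -/
noncomputable def eulerCoeff (N : ℤ) (m : ℕ) (j : ℤ) : ℤ :=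
  if 0 ≤ N ∧ 0 ≤ j then
    (((∑ i ∈ Finset.range m, (Polynomial.X : Polynomial ℤ) ^ i)) ^ N.toNat).coeff j.toNat
  else 0

/-!
The number `C(n - j + 1, m; j)` counts the `j`-element sets of vertices of a path on `n` vertices
that contain no `m` consecutive vertices: the `n - j` absent vertices separate `n - j + 1` runs of
lengths less than `m`. So the left-hand side is the `k`-th `h`-number, in dimension `d`, of the
simplicial complex of these sets, and by Chu–Vandermonde the right-hand side is that of the full
simplex. Their difference is the `h`-number of the family of nonfaces. Removing the first vertex,
or cutting after the last gap in an initial segment, splits this family recursively into Boolean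
intervals whose tops all have at least `d + 1` elements, and the `h`-numbers in dimension `d` of
such an interval are nonnegative.
-/

open Polynomial Finset

section PathComplex

variable (R : Type*) [CommSemiring R]

/-- The `f`-polynomial `∑ X ^ #S` of the sets `S` of vertices of a path on `n` vertices whose
initial run (empty if the first vertex is not in `S`) is shorter than `b` and whose other runs are
shorter than `m`. The faces of the complex of sets without `m` consecutive vertices are the case
`b = m`; the recursion removes the first vertex. -/
noncomputable def shortRunPoly (m : ℕ) : ℕ → ℕ → R[X]
  | _, 0 => 0
  | 0, _ + 1 => 1
  | n + 1, b + 1 => shortRunPoly m n m + X * shortRunPoly m n b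

@[simp]
lemma shortRunPoly_zero_right (m n : ℕ) : shortRunPoly R m n 0 = 0 := by
  cases n <;> simp [shortRunPoly]

lemma shortRunPoly_zero_succ (m b : ℕ) : shortRunPoly R m 0 (b + 1) = 1 := by
  simp [shortRunPoly]

lemma shortRunPoly_succ_succ (m n b : ℕ) :
    shortRunPoly R m (n + 1) (b + 1) = shortRunPoly R m n m + X * shortRunPoly R m n b := by
  simp [shortRunPoly]

lemma shortRunPoly_of_lt {m n b : ℕ} (hnb : n < b) (hnm : n ≤ m) :
    shortRunPoly R m n b = (1 + X) ^ n := by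
  induction n generalizing b with
  | zero =>
    obtain ⟨b, rfl⟩ := Nat.exists_eq_add_one.mpr hnb
    rw [shortRunPoly_zero_succ, pow_zero]
  | succ n ih =>
    obtain ⟨b, rfl⟩ := Nat.exists_eq_add_one.mpr (n.succ_pos.trans hnb)
    rw [shortRunPoly_succ_succ, ih (by lia) (by lia), ih (by lia) (by lia)]
    ring

lemma shortRunPoly_self_add_X_pow {m b : ℕ} (hb : b ≤ m) :
    shortRunPoly R m b b + X ^ b = (1 + X) ^ b := by
  induction b with
  | zero => simp
  | succ b ih =>
    calc shortRunPoly R m (b + 1) (b + 1) + X ^ (b + 1)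
        = (1 + X) ^ b + X * (shortRunPoly R m b b + X ^ b) := by
          rw [shortRunPoly_succ_succ, shortRunPoly_of_lt R hb (by lia)]
          ring
      _ = (1 + X) ^ (b + 1) := by
          rw [ih (by lia)]
          ring

lemma shortRunPoly_succ_right (m n b : ℕ) :
    shortRunPoly R m (n + b + 1) (b + 1) =
      shortRunPoly R m (n + b + 1) b + X ^ b * shortRunPoly R m n m := by
  induction b with
  | zero => simp [shortRunPoly_succ_succ]
  | succ b ih =>
    rw [← add_assoc, shortRunPoly_succ_succ, ih, shortRunPoly_succ_succ]
    ring

lemma shortRunPoly_add_succ_self (m n : ℕ) :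
    shortRunPoly R m (n + m + 1) m + X ^ m * shortRunPoly R m n m =
      (1 + X) * shortRunPoly R m (n + m) m := by
  cases m with
  | zero => simp
  | succ b =>
    calc _ = shortRunPoly R (b + 1) (n + b + 1) (b + 1) +
            X * (shortRunPoly R (b + 1) (n + b + 1) b +
              X ^ b * shortRunPoly R (b + 1) n (b + 1)) := by
          rw [← add_assoc n, shortRunPoly_succ_succ]
          ring
      _ = _ := by
          rw [← shortRunPoly_succ_right, ← add_assoc]
          ring

-- The summand `i` collects the sets for which `i` is the last absent vertex among the first `b`.
lemma shortRunPoly_add_self {m b : ℕ} (n : ℕ) (hb : b ≤ m) :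
    shortRunPoly R m (n + b) b =
      ∑ i ∈ range b, X ^ (b - 1 - i) * (1 + X) ^ i * shortRunPoly R m n (m - (b - 1 - i)) := by
  induction b generalizing n with
  | zero => simp
  | succ b ih =>
    have peel : ∀ i ∈ range b,
        X ^ (b - 1 - i) * (1 + X) ^ i * shortRunPoly R m (n + 1) (m - (b - 1 - i)) =
          (1 + X) ^ i * X ^ (b - 1 - i) * shortRunPoly R m n m +
            X ^ (b - i) * (1 + X) ^ i * shortRunPoly R m n (m - (b - i)) := fun i hi ↦ by
      rw [mem_range] at hi
      rw [show m - (b - 1 - i) = m - (b - i) + 1 by lia, shortRunPoly_succ_succ,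
        show b - i = b - 1 - i + 1 by lia]
      ring
    have geom : ∑ i ∈ range b, (1 + X) ^ i * X ^ (b - 1 - i) + X ^ b = (1 + X : R[X]) ^ b := by
      simpa only [mul_one] using geom_sum₂_mul_add (1 : R[X]) X b
    rw [← add_assoc, shortRunPoly_succ_right, show n + b + 1 = n + 1 + b by ring,
      ih (n + 1) (by lia), sum_congr rfl peel, sum_add_distrib, ← sum_mul, sum_range_succ,
      Nat.add_sub_cancel, Nat.sub_self, ← geom]
    simp only [Nat.sub_zero, pow_zero]
    ring

lemma coeff_shortRunPoly_of_lt {m n b j : ℕ} (h : n < j) :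
    (shortRunPoly R m n b).coeff j = 0 := by
  induction n generalizing b j with
  | zero => cases b <;> simp [shortRunPoly, coeff_one, h.ne']
  | succ n ih =>
    obtain ⟨j, rfl⟩ := Nat.exists_eq_add_one.mpr (n.succ_pos.trans h)
    cases b with
    | zero => simp
    | succ b =>
      rw [shortRunPoly_succ_succ, coeff_add, coeff_X_mul, ih (by lia), ih (by lia), add_zero]

lemma coeff_shortRunPoly {m n b j : ℕ} (hj : j ≤ n) :
    (shortRunPoly R m n b).coeff j =
      ((∑ i ∈ range b, X ^ i) * (∑ i ∈ range m, (X : R[X]) ^ i) ^ (n - j)).coeff j := by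
  induction n generalizing b j with
  | zero =>
    obtain rfl := Nat.le_zero.mp hj
    cases b <;> simp [shortRunPoly, sum_range_succ']
  | succ n ih =>
    cases b with
    | zero => simp
    | succ b =>
      rw [shortRunPoly_succ_succ, geom_sum_succ, add_comm, add_mul, one_mul, coeff_add, coeff_add,
        mul_assoc]
      congr 1
      · cases j with
        | zero => simp
        | succ j =>
          rw [coeff_X_mul, coeff_X_mul, ih (by lia), Nat.add_sub_add_right]
      · obtain rfl | hj := hj.eq_or_lt
        · simp [coeff_shortRunPoly_of_lt, coeff_one]
        · rw [ih (by lia), ← pow_succ', Nat.succ_sub (by lia)]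

lemma coeff_shortRunPoly_self (m : ℕ) {n j : ℕ} (hj : j ≤ n) :
    (shortRunPoly ℤ m n m).coeff j = eulerCoeff ((n : ℤ) - j + 1) m j := by
  rw [coeff_shortRunPoly ℤ hj, ← pow_succ', eulerCoeff, if_pos (by lia), Int.toNat_natCast,
    show ((n : ℤ) - j + 1).toNat = n - j + 1 by lia]

end PathComplex

section StanleyDecomposition

/-- The `f`-polynomials of families of finite sets that are disjoint unions of Boolean intervals
`[A, B]` with `D ≤ #B`, that is, that have a Stanley decomposition of depth at least `D`. An
interval with `#A = a` and `#B = a + c` is encoded by its `f`-polynomial `X ^ a * (1 + X) ^ c`. -/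
noncomputable def stanleyMonoid (R : Type*) [CommSemiring R] (D : ℕ) : AddSubmonoid R[X] :=
  AddSubmonoid.closure {f | ∃ a c : ℕ, D ≤ a + c ∧ f = X ^ a * (1 + X) ^ c}

section CommSemiring

variable (R : Type*) [CommSemiring R]

lemma stanleyMonoid_antitone : Antitone (stanleyMonoid R) := fun _ _ hDE ↦
  AddSubmonoid.closure_mono fun _ ⟨a, c, hE, hf⟩ ↦ ⟨a, c, hDE.trans hE, hf⟩

lemma X_pow_mul_one_add_X_pow_mem_stanleyMonoid {D a c : ℕ} (h : D ≤ a + c) :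
    X ^ a * (1 + X) ^ c ∈ stanleyMonoid R D :=
  AddSubmonoid.subset_closure ⟨a, c, h, rfl⟩

variable {R}

lemma mul_mem_stanleyMonoid {D E a c : ℕ} (h : E ≤ a + c + D) {f : R[X]}
    (hf : f ∈ stanleyMonoid R D) : X ^ a * (1 + X) ^ c * f ∈ stanleyMonoid R E := by
  induction hf using AddSubmonoid.closure_induction with
  | mem f hf =>
    obtain ⟨a', c', hD, rfl⟩ := hf
    convert X_pow_mul_one_add_X_pow_mem_stanleyMonoid R (D := E) (a := a + a') (c := c + c')
      (by lia) using 1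
    ring
  | zero => simp
  | add f g _ _ hf hg => rw [mul_add]; exact add_mem hf hg

variable (R)

lemma shortRunPoly_mem_stanleyMonoid {m b : ℕ} (n : ℕ) (hb : b ≤ m) :
    shortRunPoly R m n b ∈
      stanleyMonoid R (n - (n / (m + 1) + (n + m + 1 - b) / (m + 1))) := by
  induction n using Nat.strong_induction_on generalizing b with
  | _ n ih =>
    obtain rfl | hb₀ := b.eq_zero_or_pos
    · simp
    obtain hnb | hbn := lt_or_ge n b
    · rw [shortRunPoly_of_lt R hnb (by lia)]
      simpa only [pow_zero, one_mul] using
        X_pow_mul_one_add_X_pow_mem_stanleyMonoid R (a := 0) (c := n) (by lia)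
    · obtain ⟨N, rfl⟩ := Nat.exists_eq_add_of_le' hbn
      rw [shortRunPoly_add_self R N hb]
      refine sum_mem fun i hi ↦ mul_mem_stanleyMonoid ?_ (ih N (by lia) (Nat.sub_le _ _))
      rw [mem_range] at hi
      have h₁ : (N + m + 1 - (m - (b - 1 - i))) / (m + 1) ≤ (N + b) / (m + 1) :=
        Nat.div_le_div_right (by lia)
      have h₂ : (N + b + m + 1 - b) / (m + 1) = N / (m + 1) + 1 := by
        rw [show N + b + m + 1 - b = N + (m + 1) by lia, Nat.add_div_right _ m.succ_pos]
      lia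

end CommSemiring

lemma one_add_X_pow_sub_shortRunPoly_mem_stanleyMonoid (R : Type*) [CommRing R] {m n : ℕ}
    (hmn : m ≤ n) :
    (1 + X) ^ n - shortRunPoly R m n m ∈
      stanleyMonoid R (n + 1 - (n / (m + 1) + (n + 1) / (m + 1))) := by
  induction n, hmn using Nat.le_induction with
  | base =>
    rw [← shortRunPoly_self_add_X_pow R le_rfl, add_sub_cancel_left, Nat.div_self m.succ_pos]
    simpa only [pow_zero, mul_one] using
      X_pow_mul_one_add_X_pow_mem_stanleyMonoid R (a := m) (c := 0) (by lia)
  | succ n hn ih =>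
    obtain ⟨N, rfl⟩ := Nat.exists_eq_add_of_le' hn
    have split : (1 + X) ^ (N + m + 1) - shortRunPoly R m (N + m + 1) m =
        X ^ 0 * (1 + X) ^ 1 * ((1 + X) ^ (N + m) - shortRunPoly R m (N + m) m) +
          X ^ m * (1 + X) ^ 0 * shortRunPoly R m N m := by
      linear_combination -shortRunPoly_add_succ_self R m N
    have div_succ (q : ℕ) : (q + (m + 1)) / (m + 1) = q / (m + 1) + 1 :=
      Nat.add_div_right q m.succ_pos
    rw [split]
    refine add_mem (mul_mem_stanleyMonoid ?_ ih)
      (mul_mem_stanleyMonoid ?_ (shortRunPoly_mem_stanleyMonoid R N le_rfl))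
    · have : (N + m) / (m + 1) ≤ (N + m + 1 + 1) / (m + 1) := Nat.div_le_div_right (by lia)
      lia
    · rw [show N + m + 1 + 1 = N + 1 + (m + 1) by ring, div_succ,
        show N + m + 1 = N + (m + 1) by ring, div_succ,
        show N + (m + 1) - m = N + 1 by lia]
      lia

end StanleyDecomposition

section HNumber

section CommRing

variable {R : Type*} [CommRing R]

/-- The `k`-th `h`-number of a family of finite sets with `f`-polynomial `f`, with respect to the
dimension `D - 1` and for `k ≤ D`: the coefficient of `X ^ k` in
`∑ j ∈ range (D + 1), f.coeff j * X ^ j * (1 - X) ^ (D - j)`. -/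
noncomputable def hNumber (D k : ℕ) : R[X] →ₗ[R] R :=
  ∑ j ∈ range (k + 1), ((-1) ^ (k - j) * ((D - j).choose (k - j) : R)) • lcoeff R j

lemma hNumber_apply (D k : ℕ) (f : R[X]) :
    hNumber D k f =
      ∑ j ∈ range (k + 1), (-1) ^ (k - j) * ((D - j).choose (k - j) : R) * f.coeff j := by
  simp [hNumber]

lemma hNumber_X_pow_mul_of_lt (D : ℕ) {k a : ℕ} (h : k < a) (f : R[X]) :
    hNumber D k (X ^ a * f) = 0 := by
  rw [hNumber_apply]
  refine sum_eq_zero fun j hj ↦ ?_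
  rw [mem_range] at hj
  rw [coeff_X_pow_mul', if_neg (by lia), mul_zero]

lemma hNumber_X_pow_mul (a D k : ℕ) (f : R[X]) :
    hNumber (a + D) (a + k) (X ^ a * f) = hNumber D k f := by
  have low : ∀ j ∈ range a, (-1) ^ (a + k - j) * ((a + D - j).choose (a + k - j) : R) *
      (X ^ a * f).coeff j = 0 := fun j hj ↦ by
    rw [coeff_X_pow_mul', if_neg (by simpa using hj), mul_zero]
  rw [hNumber_apply, hNumber_apply, add_assoc, sum_range_add, sum_eq_zero low, zero_add]
  simp only [Nat.add_sub_add_left, coeff_X_pow_mul', Nat.le_add_right, if_true,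
    Nat.add_sub_cancel_left]

lemma sum_neg_one_pow_mul_choose_mul_choose {D k : ℕ} (hk : k ≤ D) (e : ℕ) :
    ∑ j ∈ range (k + 1), (-1 : ℤ) ^ (k - j) * (D - j).choose (k - j) * (D + e).choose j =
      Nat.multichoose e k := by
  have reflect : ∀ j ∈ range (k + 1), (-1 : ℤ) ^ (k - j) * (D - j).choose (k - j) =
      Ring.choose (-((D : ℤ) - k + 1)) (k - j) := fun j hj ↦ by
    rw [mem_range] at hj
    rw [Ring.choose_neg, show (D : ℤ) - k + 1 + (k - j : ℕ) - 1 = (D - j : ℕ) by lia,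
      Ring.choose_natCast, Int.negOnePow_def]
    simp [Units.smul_def]
  have top : ((D + e : ℕ) : ℤ) + -((D : ℤ) - k + 1) = e + k - 1 := by
    push_cast
    ring
  calc _ = ∑ j ∈ range (k + 1),
          Ring.choose ((D + e : ℕ) : ℤ) j * Ring.choose (-((D : ℤ) - k + 1)) (k - j) :=
        sum_congr rfl fun j hj ↦ by rw [reflect j hj, Ring.choose_natCast, mul_comm]
    _ = Ring.choose (e + k - 1 : ℤ) k := by
        rw [← top, Ring.add_choose_eq k (Commute.all _ _), Nat.sum_antidiagonal_eq_sum_range_succ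
          fun i j ↦ Ring.choose ((D + e : ℕ) : ℤ) i * Ring.choose (-((D : ℤ) - k + 1)) j]
    _ = Nat.multichoose e k := by
        obtain rfl | hk₀ := k.eq_zero_or_pos
        · simp
        · rw [Nat.multichoose_eq, ← Ring.choose_natCast, Nat.cast_sub (by lia)]
          push_cast
          rfl

lemma hNumber_one_add_X_pow {D k : ℕ} (hk : k ≤ D) (e : ℕ) :
    hNumber D k ((1 + X : R[X]) ^ (D + e)) = Nat.multichoose e k := by
  simp only [hNumber_apply, coeff_one_add_X_pow]
  exact_mod_cast congrArg (Int.cast : ℤ → R) (sum_neg_one_pow_mul_choose_mul_choose hk e)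

end CommRing

section Ordered

variable {R : Type*} [CommRing R] [PartialOrder R] [IsOrderedRing R]

lemma hNumber_nonneg {D k : ℕ} (hk : k ≤ D) {f : R[X]} (hf : f ∈ stanleyMonoid R D) :
    0 ≤ hNumber D k f := by
  induction hf using AddSubmonoid.closure_induction with
  | mem f hf =>
    obtain ⟨a, c, hD, rfl⟩ := hf
    obtain hka | hak := lt_or_ge k a
    · exact (hNumber_X_pow_mul_of_lt D hka _).ge
    · obtain ⟨k, rfl⟩ := Nat.exists_eq_add_of_le hak
      obtain ⟨D, rfl⟩ := Nat.exists_eq_add_of_le (hak.trans hk)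
      obtain ⟨e, rfl⟩ := Nat.exists_eq_add_of_le (Nat.le_of_add_le_add_left hD)
      rw [hNumber_X_pow_mul, hNumber_one_add_X_pow (Nat.le_of_add_le_add_left hk)]
      exact Nat.cast_nonneg _
  | zero => rw [map_zero]
  | add f g _ _ hf hg => rw [map_add]; exact add_nonneg hf hg

lemma hNumber_shortRunPoly_le {m n D k : ℕ} (hmn : m ≤ n)
    (hD : D ≤ n + 1 - (n / (m + 1) + (n + 1) / (m + 1))) (hk : k ≤ D) :
    hNumber D k (shortRunPoly R m n m) ≤ Nat.multichoose (n - D) k := by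
  have one_le : 1 ≤ (n + 1) / (m + 1) := Nat.div_pos (by lia) m.succ_pos
  calc hNumber D k (shortRunPoly R m n m)
      ≤ hNumber D k ((1 + X) ^ n) := by
        rw [← sub_nonneg, ← map_sub]
        exact hNumber_nonneg hk <| stanleyMonoid_antitone R hD <|
          one_add_X_pow_sub_shortRunPoly_mem_stanleyMonoid R hmn
    _ = Nat.multichoose (n - D) k := by
        rw [← hNumber_one_add_X_pow hk, Nat.add_sub_cancel' (by lia)]

end Ordered

end HNumber

theorem stmt6 (n m d k : ℕ) (hm : 1 ≤ m) (hmn : m ≤ n)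
    (hd : d = n + 1 - (n + 1) / (m + 1) - (n + 1 + m) / (m + 1)) (hk : k ≤ d + 1) :
    ∑ j ∈ Finset.range (k + 1),
        (-1 : ℤ) ^ (k - j) * ((d + 1 - j).choose (k - j) : ℤ) * eulerCoeff ((n : ℤ) - j + 1) m j
      ≤ ((n - d + k - 2).choose k : ℤ) := by
  have ceil : (n + 1 + m) / (m + 1) = n / (m + 1) + 1 := by
    rw [add_assoc, add_comm 1 m, Nat.add_div_right n m.succ_pos]
  have one_le : 1 ≤ (n + 1) / (m + 1) := Nat.div_pos (by lia) m.succ_pos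
  have le_half : n / (m + 1) ≤ n / 2 := Nat.div_le_div_left (by lia) two_pos
  have succ_le_half : (n + 1) / (m + 1) ≤ (n + 1) / 2 := Nat.div_le_div_left (by lia) two_pos
  have depth : n + 1 - (n / (m + 1) + (n + 1) / (m + 1)) = d + 1 := by lia
  calc _ = hNumber (d + 1) k (shortRunPoly ℤ m n m) := by
        rw [hNumber_apply]
        refine sum_congr rfl fun j hj ↦ ?_
        rw [mem_range] at hj
        rw [coeff_shortRunPoly_self m (by lia)]
    _ ≤ Nat.multichoose (n - (d + 1)) k := hNumber_shortRunPoly_le hmn depth.ge hk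
    _ = _ := by rw [Nat.multichoose_eq, show n - (d + 1) + k - 1 = n - d + k - 2 by lia]
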